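/- Under hypothesis (1.0), the DN principal eigenvalue λ₀ is strictly positive if and only if δ := sup_{x∈(0,D)} ν(0,x)·μ(x,D) < ∞; more precisely, (4δ)^{-1} ≤ λ₀ ≤ δ^{-1}. In particular λ₀ = 0 if μ(0,D) = ∞, and λ₀ > 0 if either D < ∞ or ∫₀^D ( e^{C(u)}/a(u) + e^{−C(u)} ) du < ∞. -/

import Mathlib

/-!
The bound `(4δ)⁻¹ ≤ λ₀` is Muckenhoupt's weighted Hardy inequality `μ(f²) ≤ 4 δ D(f)`.
Put `N(x) = ν(0,x)`, `M(x) = μ(x,D)` and let `h = e^C |f'|` be the `ν`-density of `|f'| dx`, so that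
`|f(x)| ≤ ∫_{(0,x)} h dν` and `D(f) = ∫ h² dν`. Cauchy–Schwarz with the factor `N^{1/4} N^{-1/4}`
gives `f(x)² ≤ (∫_{(0,x)} h² N^{1/2} dν) (∫_{(0,x)} N^{-1/2} dν)`, and after Tonelli everything
follows from `N ≤ δ / M` and from the two estimates
`∫_{(0,x)} N^{-1/2} dν ≤ 2 N(x)^{1/2}`, `∫_{(y,D)} M^{-1/2} dμ ≤ 2 M(y)^{1/2}`.
These hold for all atomless measures: since `ν{N ≤ s} ≤ s` and `μ{M ≤ s} ≤ s`
(`meas_sublevel_left`, `meas_sublevel_right`), both are instances of the layer-cake bound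
`lintegral_rpow_neg_half_le`. The inequality itself is `hardy`.

For `λ₀ ≤ δ⁻¹`, given `p < q` in `(0,D)`, test with `f(x) = ∫₀ˣ e^{-C} χ`, where `χ` is a continuous
cutoff from `1` on `[0,p]` to `0` on `[q,D)`. As `χ² ≤ χ`, `D(f) ≤ f(q)`, while
`μ(f²) ≥ f(q)² M(q)` and `f(q) ≥ N(p)`; hence `λ₀ N(p) M(q) ≤ 1` (`upper_bound_aux`), and `q ↓ p`
gives the claim (`upper_bound`).

The remaining assertions follow from these two bounds: `μ(0,D) = ∞` forces `δ = ∞` because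
`μ(0,x) < ∞`, and `δ ≤ ν(0,D) μ(0,D)` is finite when `D < ∞` or when both densities are integrable.
-/

open MeasureTheory Set Filter Topology ENNReal

noncomputable section

/-- The open interval `(0, D)` in `ℝ`, where `D : ℝ≥0∞` may be infinite. -/
def ooI (D : ℝ≥0∞) : Set ℝ := {x : ℝ | 0 < x ∧ ENNReal.ofReal x < D}

/-- The interval `[0, D)` in `ℝ`. -/
def coI (D : ℝ≥0∞) : Set ℝ := {x : ℝ | 0 ≤ x ∧ ENNReal.ofReal x < D}

/-- The interval `[0, D]` in `ℝ` (conventionally `[0, ∞)` when `D = ∞`). -/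
def ccI (D : ℝ≥0∞) : Set ℝ := {x : ℝ | 0 ≤ x ∧ ENNReal.ofReal x ≤ D}

/-- `C(x) = ∫_0^x b(u)/a(u) du`. -/
def Cf (a b : ℝ → ℝ) (x : ℝ) : ℝ := ∫ u in Set.Ioo 0 x, b u / a u

/-- The measure `μ(dx) = (e^{C(x)}/a(x)) dx` on `(0, D)`. -/
def muM (a b : ℝ → ℝ) (D : ℝ≥0∞) : Measure ℝ :=
  (volume.restrict (ooI D)).withDensity fun x => ENNReal.ofReal (Real.exp (Cf a b x) / a x)

/-- The measure `ν(dx) = e^{-C(x)} dx` on `(0, D)`. -/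
def nuM (a b : ℝ → ℝ) (D : ℝ≥0∞) : Measure ℝ :=
  (volume.restrict (ooI D)).withDensity fun x => ENNReal.ofReal (Real.exp (-Cf a b x))

/-- Hypothesis (1.0): `a`, `b` Borel measurable, `a > 0` on `(0,D)`, and `b/a`, `e^C/a`
locally integrable on `[0, D]`. -/
def Hyp (a b : ℝ → ℝ) (D : ℝ≥0∞) : Prop :=
  Measurable a ∧ Measurable b ∧ (∀ x ∈ ooI D, 0 < a x) ∧
    ∀ p : ℝ, 0 ≤ p → ENNReal.ofReal p ≤ D →
      IntegrableOn (fun u => b u / a u) (Set.Icc 0 p) ∧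
      IntegrableOn (fun u => Real.exp (Cf a b u) / a u) (Set.Icc 0 p)

/-- `f ∈ C¹(0,D) ∩ C[0,D]`. -/
def C1C (D : ℝ≥0∞) (f : ℝ → ℝ) : Prop :=
  ContinuousOn f (ccI D) ∧ (∀ x ∈ ooI D, DifferentiableAt ℝ f x) ∧
    ContinuousOn (deriv f) (ooI D)

/-- The Dirichlet form `D(f) = ∫_0^D e^{C} f'^2 dx`. -/
def Dform (a b : ℝ → ℝ) (D : ℝ≥0∞) (f : ℝ → ℝ) : ℝ≥0∞ :=
  ∫⁻ x in ooI D, ENNReal.ofReal (Real.exp (Cf a b x) * deriv f x ^ 2)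

/-- `μ(f²)`. -/
def muL2 (a b : ℝ → ℝ) (D : ℝ≥0∞) (f : ℝ → ℝ) : ℝ≥0∞ :=
  ∫⁻ x, ENNReal.ofReal (f x ^ 2) ∂(muM a b D)

/-- The ND (Neumann at `0`, Dirichlet at `D`) principal eigenvalue `λ₀`, defined with
compactly supported test functions. -/
def lam0 (a b : ℝ → ℝ) (D : ℝ≥0∞) : ℝ≥0∞ :=
  sInf {r | ∃ f : ℝ → ℝ, C1C D f ∧
    (∃ p : ℝ, 0 ≤ p ∧ ENNReal.ofReal p < D ∧ ∀ x, p < x → f x = 0) ∧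
    (D ≠ ∞ → f D.toReal = 0) ∧ muL2 a b D f = 1 ∧ r = Dform a b D f}

/-- The DN (Dirichlet at `0`, Neumann at `D`) principal eigenvalue:
`λ₀ = inf { D(f)/μ(f²) : f ∈ C¹(0,D) ∩ C[0,D], D(f) < ∞, f(0) = 0, f ≠ 0 }`. -/
def lam0DN (a b : ℝ → ℝ) (D : ℝ≥0∞) : ℝ≥0∞ :=
  sInf {r | ∃ f : ℝ → ℝ, C1C D f ∧ Dform a b D f ≠ ∞ ∧ f 0 = 0 ∧
    (¬∀ x ∈ ccI D, f x = 0) ∧ r = Dform a b D f / muL2 a b D f}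

/-- The DN single-integral operator `I(f)(x) = (e^{-C(x)}/f'(x)) ∫_x^D f dμ`
(valued in `ℝ≥0∞`, with the convention `1/0 = ∞`). -/
def opIdn (a b : ℝ → ℝ) (D : ℝ≥0∞) (f : ℝ → ℝ) (x : ℝ) : ℝ≥0∞ :=
  ENNReal.ofReal (Real.exp (-Cf a b x)) *
      (∫⁻ u in Set.Ioi x, ENNReal.ofReal (f u) ∂(muM a b D)) /
    ENNReal.ofReal (deriv f x)

/-- The DN double-integral operator
`II(f)(x) = (1/f(x)) ∫_0^x ν(ds) ∫_s^D f dμ`. -/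
def opIIdn (a b : ℝ → ℝ) (D : ℝ≥0∞) (f : ℝ → ℝ) (x : ℝ) : ℝ≥0∞ :=
  (∫⁻ s in Set.Ioo 0 x,
      (∫⁻ u in Set.Ioi s, ENNReal.ofReal (f u) ∂(muM a b D)) ∂(nuM a b D)) /
    ENNReal.ofReal (f x)

/-- The DN constant `δ = sup_{x∈(0,D)} ν(0,x) μ(x,D)`. -/
def deltaDN (a b : ℝ → ℝ) (D : ℝ≥0∞) : ℝ≥0∞ :=
  ⨆ x ∈ ooI D, nuM a b D (Set.Ioo 0 x) * muM a b D (Set.Ioi x)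

/-! ### The weighted Hardy inequality for atomless measures -/

/-- Since `ν` has no atoms, a sublevel set `{ν(-∞,y) ≤ s}` has `ν`-mass at most `s`: a compact subset
lies in some `(-∞,y]` with `y` in the set. -/
theorem meas_sublevel_left (ν : Measure ℝ) [NullSingletonClass ν] (B : Set ℝ)
    (hfin : ν B ≠ ∞) (s : ℝ≥0∞) :
    (ν.restrict B) {y | ν (Iio y) ≤ s} ≤ s := by
  have hm : Monotone fun y : ℝ => ν (Iio y) := fun x y hxy => measure_mono (Iio_subset_Iio hxy)
  have hA : MeasurableSet {y : ℝ | ν (Iio y) ≤ s} := measurableSet_le hm.measurable measurable_const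
  have : IsFiniteMeasure (ν.restrict B) := ⟨by simpa using hfin.lt_top⟩
  by_contra! hlt
  obtain ⟨K, hKA, hK, hKs⟩ := hA.exists_lt_isCompact_of_ne_top (measure_ne_top _ _) hlt
  rcases K.eq_empty_or_nonempty with rfl | hne
  · simp at hKs
  · obtain ⟨y, hy, hmax⟩ := hK.exists_isGreatest hne
    have h1 : (ν.restrict B) K ≤ ν (Iio y) := calc
      (ν.restrict B) K ≤ ν K := Measure.restrict_apply_le _ _
      _ ≤ ν (Iic y) := measure_mono fun z hz => hmax hz
      _ = ν (Iio y) := measure_congr Iio_ae_eq_Iic.symm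
    exact absurd (hKs.trans_le (h1.trans (hKA hy))) (lt_irrefl _)

/-- The mirror image of `meas_sublevel_left`. -/
theorem meas_sublevel_right (μ : Measure ℝ) [NullSingletonClass μ] (B : Set ℝ)
    (hfin : μ B ≠ ∞) (s : ℝ≥0∞) :
    (μ.restrict B) {y | μ (Ioi y) ≤ s} ≤ s := by
  have hm : Antitone fun y : ℝ => μ (Ioi y) := fun x y hxy => measure_mono (Ioi_subset_Ioi hxy)
  have hA : MeasurableSet {y : ℝ | μ (Ioi y) ≤ s} := measurableSet_le hm.measurable measurable_const
  have : IsFiniteMeasure (μ.restrict B) := ⟨by simpa using hfin.lt_top⟩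
  by_contra! hlt
  obtain ⟨K, hKA, hK, hKs⟩ := hA.exists_lt_isCompact_of_ne_top (measure_ne_top _ _) hlt
  rcases K.eq_empty_or_nonempty with rfl | hne
  · simp at hKs
  · obtain ⟨y, hy, hmin⟩ := hK.exists_isLeast hne
    have h1 : (μ.restrict B) K ≤ μ (Ioi y) := calc
      (μ.restrict B) K ≤ μ K := Measure.restrict_apply_le _ _
      _ ≤ μ (Ici y) := measure_mono fun z hz => hmin hz
      _ = μ (Ioi y) := measure_congr Ioi_ae_eq_Ici.symm
    exact absurd (hKs.trans_le (h1.trans (hKA hy))) (lt_irrefl _)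

/-- `∫₀^∞ min(m, t⁻²) dt ≤ 2√m`, splitting at `t = m^{-1/2}`. -/
theorem lintegral_min_le (m : ℝ≥0∞) (hm : m ≠ ∞) :
    ∫⁻ t in Ioi (0:ℝ), min m (ENNReal.ofReal (t ^ (-2:ℝ))) ≤ 2 * m ^ (1/2:ℝ) := by
  rcases eq_or_ne m 0 with rfl | h0
  · simp
  obtain ⟨r, rfl⟩ : ∃ r : ℝ, m = ENNReal.ofReal r := ⟨m.toReal, (ENNReal.ofReal_toReal hm).symm⟩
  have hr : 0 < r := by simpa using h0
  set c : ℝ := r ^ (-(1/2):ℝ) with hc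
  have hcpos : 0 < c := Real.rpow_pos_of_pos hr _
  have hs : ENNReal.ofReal r ^ (1/2:ℝ) = ENNReal.ofReal (r ^ (1/2:ℝ)) :=
    ENNReal.ofReal_rpow_of_pos hr
  rw [← Ioc_union_Ioi_eq_Ioi hcpos.le]
  refine (lintegral_union_le _ _ _).trans ?_
  rw [two_mul]
  refine add_le_add ?_ ?_
  · refine (lintegral_mono fun t => min_le_left _ _).trans ?_
    rw [setLIntegral_const, Real.volume_Ioc, ← ENNReal.ofReal_mul hr.le, hs, sub_zero]
    refine (congrArg _ ?_).le
    rw [hc, ← Real.rpow_one_add' hr.le (by norm_num)]; norm_num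
  · refine (lintegral_mono fun t => min_le_right _ _).trans ?_
    rw [← ofReal_integral_eq_lintegral_ofReal (integrableOn_Ioi_rpow_of_lt (by norm_num) hcpos)
      ((ae_restrict_mem measurableSet_Ioi).mono fun t ht =>
        Real.rpow_nonneg (hcpos.trans ht).le _),
      integral_Ioi_rpow_of_lt (by norm_num) hcpos, hs]
    refine (congrArg _ ?_).le
    rw [hc, ← Real.rpow_mul hr.le]; norm_num

/-- By the layer cake formula `∫ φ^{-1/2} dρ = ∫₀^∞ ρ{φ ≤ t⁻²} dt`, and the integrand is at most
`min(ρ(ℝ), t⁻²)`. -/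
theorem lintegral_rpow_neg_half_le (ρ : Measure ℝ) (hρ : ρ univ ≠ ∞) (φ : ℝ → ℝ≥0∞)
    (hφ : Measurable φ) (h : ∀ s, ρ {y | φ y ≤ s} ≤ s) :
    ∫⁻ y, φ y ^ (-(1/2):ℝ) ∂ρ ≤ 2 * (ρ univ) ^ (1/2:ℝ) := by
  have h0 : ∀ᵐ y ∂ρ, φ y ≠ 0 := by
    rw [ae_iff]; simpa using h 0
  have heq : ∫⁻ y, φ y ^ (-(1/2):ℝ) ∂ρ
      = ∫⁻ y, ENNReal.ofReal ((φ y ^ (-(1/2):ℝ)).toReal) ∂ρ := by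
    refine lintegral_congr_ae (h0.mono fun y hy => ?_)
    refine (ENNReal.ofReal_toReal ?_).symm
    rw [Ne, ENNReal.rpow_eq_top_iff]
    rintro (⟨h1, -⟩ | ⟨-, h2⟩)
    · exact hy h1
    · norm_num at h2
  rw [heq, lintegral_eq_lintegral_meas_le ρ (Eventually.of_forall fun _ => toReal_nonneg)
    (by fun_prop)]
  refine le_trans (setLIntegral_mono' measurableSet_Ioi fun t ht => ?_) (lintegral_min_le _ hρ)
  refine le_min (measure_mono (subset_univ _)) ?_
  refine le_trans (measure_mono fun y hy => ?_) (h _)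
  have ht' : (0:ℝ) < t := ht
  have hy1 : ENNReal.ofReal t ≤ φ y ^ (-(1/2):ℝ) :=
    ENNReal.ofReal_le_of_le_toReal hy
  have hpos : ENNReal.ofReal t ≠ 0 := by simpa using ht'
  have h2 := ENNReal.rpow_le_rpow hy1 (show (0:ℝ) ≤ 2 by norm_num)
  rw [← ENNReal.rpow_mul] at h2
  norm_num at h2
  have h3 := ENNReal.inv_le_inv.2 h2
  simp only [ENNReal.rpow_neg_one, inv_inv] at h3
  show φ y ≤ _
  rw [← ENNReal.ofReal_rpow_of_pos ht', ENNReal.rpow_neg]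
  simpa using h3

/-- Muckenhoupt's form of the weighted Hardy inequality, for atomless measures carried by a set on
which the two tails are positive and finite. -/
theorem hardy (μ ν : Measure ℝ) [SFinite μ] [SFinite ν] [NullSingletonClass μ]
    [NullSingletonClass ν] (S : Set ℝ) (hμS : ∀ᵐ x ∂μ, x ∈ S) (hνS : ∀ᵐ x ∂ν, x ∈ S)
    (hN0 : ∀ x ∈ S, ν (Iio x) ≠ 0) (hNt : ∀ x ∈ S, ν (Iio x) ≠ ∞)
    (hM0 : ∀ x ∈ S, μ (Ioi x) ≠ 0) (hMt : ∀ x ∈ S, μ (Ioi x) ≠ ∞)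
    (K : ℝ≥0∞) (hK : ∀ x ∈ S, ν (Iio x) * μ (Ioi x) ≤ K)
    (h : ℝ → ℝ≥0∞) (hm : Measurable h) :
    ∫⁻ x, (∫⁻ y in Iio x, h y ∂ν) ^ (2:ℝ) ∂μ ≤ 4 * K * ∫⁻ y, h y ^ (2:ℝ) ∂ν := by
  set N : ℝ → ℝ≥0∞ := fun x => ν (Iio x) with hNdef
  set M : ℝ → ℝ≥0∞ := fun x => μ (Ioi x) with hMdef
  have hNm : Measurable N :=
    (show Monotone N from fun x y hxy => measure_mono (Iio_subset_Iio hxy)).measurable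
  have hMm : Measurable M :=
    (show Antitone M from fun x y hxy => measure_mono (Ioi_subset_Ioi hxy)).measurable
  set g : ℝ → ℝ≥0∞ := fun y => h y ^ (2:ℝ) * N y ^ (1/2:ℝ) with hg
  have hgm : Measurable g := by fun_prop
  -- Cauchy–Schwarz after inserting the factor `N^{1/4} N^{-1/4}`.
  have step1 : ∀ x ∈ S, (∫⁻ y in Iio x, h y ∂ν) ^ (2:ℝ)
      ≤ 2 * N x ^ (1/2:ℝ) * ∫⁻ y in Iio x, g y ∂ν := by
    intro x hx
    have e1 : ∫⁻ y in Iio x, h y ∂ν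
        = ∫⁻ y in Iio x, ((fun y => h y * N y ^ (1/4:ℝ)) * fun y => N y ^ (-(1/4):ℝ)) y ∂ν := by
      refine lintegral_congr_ae ((ae_restrict_of_ae hνS).mono fun y hy => ?_)
      simp only [Pi.mul_apply]
      rw [mul_assoc, ← ENNReal.rpow_add _ _ (hN0 y hy) (hNt y hy)]
      simp
    have cs := ENNReal.lintegral_mul_le_Lp_mul_Lq (ν.restrict (Iio x))
      (Real.HolderConjugate.two_two) (f := fun y => h y * N y ^ (1/4:ℝ))
      (g := fun y => N y ^ (-(1/4):ℝ)) (by fun_prop) (by fun_prop)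
    rw [← e1] at cs
    have cs2 := ENNReal.rpow_le_rpow cs (show (0:ℝ) ≤ 2 by norm_num)
    rw [ENNReal.mul_rpow_of_nonneg _ _ (by norm_num : (0:ℝ) ≤ 2), ← ENNReal.rpow_mul,
      ← ENNReal.rpow_mul] at cs2
    have ea : ∀ y, (h y * N y ^ (1/4:ℝ)) ^ (2:ℝ) = g y := fun y => by
      rw [ENNReal.mul_rpow_of_nonneg _ _ (by norm_num : (0:ℝ) ≤ 2), ← ENNReal.rpow_mul, hg]
      norm_num
    have eb : ∀ y, (N y ^ (-(1/4):ℝ)) ^ (2:ℝ) = N y ^ (-(1/2):ℝ) := fun y => by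
      rw [← ENNReal.rpow_mul]; norm_num
    simp only [ea, eb] at cs2
    rw [show (1 / 2 * 2 : ℝ) = 1 by norm_num, ENNReal.rpow_one, ENNReal.rpow_one] at cs2
    refine cs2.trans ?_
    rw [mul_comm]
    refine mul_le_mul_left ?_ _
    have := lintegral_rpow_neg_half_le (ν.restrict (Iio x)) (by simpa using hNt x hx) N hNm
      (meas_sublevel_left ν (Iio x) (hNt x hx))
    simpa using this
  have step2 : ∀ y ∈ S, ∫⁻ x in Ioi y, 2 * N x ^ (1/2:ℝ) ∂μ
      ≤ 4 * K ^ (1/2:ℝ) * M y ^ (1/2:ℝ) := by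
    intro y hy
    have hb : ∀ x ∈ S, N x ^ (1/2:ℝ) ≤ K ^ (1/2:ℝ) * M x ^ (-(1/2):ℝ) := by
      intro x hx
      have h1 := ENNReal.rpow_le_rpow (hK x hx) (show (0:ℝ) ≤ 1/2 by norm_num)
      rw [ENNReal.mul_rpow_of_nonneg _ _ (by norm_num : (0:ℝ) ≤ 1/2)] at h1
      calc N x ^ (1/2:ℝ) = N x ^ (1/2:ℝ) * M x ^ (1/2:ℝ) * M x ^ (-(1/2):ℝ) := by
            rw [mul_assoc, ← ENNReal.rpow_add _ _ (hM0 x hx) (hMt x hx)]; simp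
        _ ≤ _ := mul_le_mul_left h1 _
    calc ∫⁻ x in Ioi y, 2 * N x ^ (1/2:ℝ) ∂μ
        ≤ ∫⁻ x in Ioi y, 2 * K ^ (1/2:ℝ) * M x ^ (-(1/2):ℝ) ∂μ := by
          refine lintegral_mono_ae ((ae_restrict_of_ae hμS).mono fun x hx => ?_)
          rw [mul_assoc]
          exact mul_le_mul_right (hb x hx) _
      _ = 2 * K ^ (1/2:ℝ) * ∫⁻ x in Ioi y, M x ^ (-(1/2):ℝ) ∂μ :=
          lintegral_const_mul _ (by fun_prop)
      _ ≤ 2 * K ^ (1/2:ℝ) * (2 * M y ^ (1/2:ℝ)) := by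
          refine mul_le_mul_right ?_ _
          have := lintegral_rpow_neg_half_le (μ.restrict (Ioi y)) (by simpa using hMt y hy) M hMm
            (meas_sublevel_right μ (Ioi y) (hMt y hy))
          simpa using this
      _ = _ := by ring
  calc ∫⁻ x, (∫⁻ y in Iio x, h y ∂ν) ^ (2:ℝ) ∂μ
      ≤ ∫⁻ x, 2 * N x ^ (1/2:ℝ) * ∫⁻ y in Iio x, g y ∂ν ∂μ :=
        lintegral_mono_ae (hμS.mono step1)
    _ = ∫⁻ x, ∫⁻ y, {p : ℝ × ℝ | p.2 < p.1}.indicator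
          (fun p => 2 * N p.1 ^ (1/2:ℝ) * g p.2) (x, y) ∂ν ∂μ := by
        refine lintegral_congr fun x => ?_
        rw [← lintegral_const_mul _ hgm, ← lintegral_indicator measurableSet_Iio]
        rfl
    _ = ∫⁻ y, ∫⁻ x, {p : ℝ × ℝ | p.2 < p.1}.indicator
          (fun p => 2 * N p.1 ^ (1/2:ℝ) * g p.2) (x, y) ∂μ ∂ν := by
        refine lintegral_lintegral_swap (Measurable.aemeasurable ?_)
        refine Measurable.indicator ?_ (measurableSet_lt measurable_snd measurable_fst)
        exact ((hNm.comp measurable_fst).pow_const _ |>.const_mul _).mul (hgm.comp measurable_snd)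
    _ = ∫⁻ y, (∫⁻ x in Ioi y, 2 * N x ^ (1/2:ℝ) ∂μ) * g y ∂ν := by
        refine lintegral_congr fun y => ?_
        rw [← lintegral_mul_const _ (by fun_prop), ← lintegral_indicator measurableSet_Ioi]
        rfl
    _ ≤ ∫⁻ y, 4 * K * h y ^ (2:ℝ) ∂ν := by
        refine lintegral_mono_ae (hνS.mono fun y hy => ?_)
        calc (∫⁻ x in Ioi y, 2 * N x ^ (1/2:ℝ) ∂μ) * g y
            ≤ 4 * K ^ (1/2:ℝ) * M y ^ (1/2:ℝ) * g y := mul_le_mul_left (step2 y hy) _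
          _ = 4 * K ^ (1/2:ℝ) * (N y * M y) ^ (1/2:ℝ) * h y ^ (2:ℝ) := by
              rw [ENNReal.mul_rpow_of_nonneg _ _ (by norm_num : (0:ℝ) ≤ 1/2), hg]; ring
          _ ≤ 4 * K ^ (1/2:ℝ) * K ^ (1/2:ℝ) * h y ^ (2:ℝ) := by
              gcongr; exact hK y hy
          _ = _ := by
              rw [mul_assoc 4, ← ENNReal.rpow_add_of_nonneg _ _ (by norm_num) (by norm_num)]
              norm_num
    _ = _ := lintegral_const_mul _ (by fun_prop)

/-! ### The intervals and the measures `μ`, `ν` -/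

theorem isOpen_ooI (D : ℝ≥0∞) : IsOpen (ooI D) :=
  isOpen_Ioi.inter (isOpen_Iio.preimage ENNReal.continuous_ofReal)

theorem Ioo_subset_ooI {D : ℝ≥0∞} {x : ℝ} (hx : x ∈ ccI D) : Ioo 0 x ⊆ ooI D := fun y hy =>
  ⟨hy.1, ((ENNReal.ofReal_lt_ofReal_iff (hy.1.trans hy.2)).2 hy.2).trans_le hx.2⟩

theorem ooI_subset_ccI (D : ℝ≥0∞) : ooI D ⊆ ccI D := fun _ hx => ⟨hx.1.le, hx.2.le⟩

theorem Icc_subset_ccI {D : ℝ≥0∞} {x : ℝ} (hx : x ∈ ccI D) : Icc 0 x ⊆ ccI D := fun _ hy =>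
  ⟨hy.1, (ENNReal.ofReal_le_ofReal hy.2).trans hx.2⟩

theorem exists_gt_mem_ooI {D : ℝ≥0∞} {x : ℝ} (hx : x ∈ ooI D) : ∃ p ∈ ooI D, x < p := by
  obtain ⟨r, hr, h1, h2⟩ := ENNReal.lt_iff_exists_real_btwn.1 hx.2
  have : x < r := by
    by_contra! hle
    exact absurd (h1.trans_le (ENNReal.ofReal_le_ofReal hle)) (lt_irrefl _)
  exact ⟨r, ⟨hx.1.trans this, h2⟩, this⟩

theorem ooI_nonempty {D : ℝ≥0∞} (hD : 0 < D) : (ooI D).Nonempty := by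
  obtain ⟨r, hr, h1, h2⟩ := ENNReal.lt_iff_exists_real_btwn.1 hD
  exact ⟨r, by simpa using h1, h2⟩

section Weights

variable {a b : ℝ → ℝ} {D : ℝ≥0∞}

theorem Cf_continuousOn (hyp : Hyp a b D) {p : ℝ} (hp : p ∈ ccI D) :
    ContinuousOn (Cf a b) (Icc 0 p) := by
  have := intervalIntegral.continuousOn_primitive (hyp.2.2.2 p hp.1 hp.2).1
  refine this.congr fun x _ => ?_
  simp only [Cf, integral_Ioc_eq_integral_Ioo]

theorem Cf_continuousOn_ooI (hyp : Hyp a b D) : ContinuousOn (Cf a b) (ooI D) := by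
  intro x hx
  obtain ⟨p, hp, hxp⟩ := exists_gt_mem_ooI hx
  exact ((Cf_continuousOn hyp (ooI_subset_ccI D hp)).continuousAt
    (Icc_mem_nhds hx.1 hxp)).continuousWithinAt

/-- `C` cut off to `0` outside `(0,D)`, where the integral defining it may be a junk value. -/
def Cm (a b : ℝ → ℝ) (D : ℝ≥0∞) : ℝ → ℝ := (ooI D).indicator (Cf a b)

theorem measurable_Cm (hyp : Hyp a b D) : Measurable (Cm a b D) := by
  classical
  unfold Cm
  rw [← piecewise_eq_indicator]
  exact (Cf_continuousOn_ooI hyp).measurable_piecewise continuousOn_const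
    (isOpen_ooI D).measurableSet

theorem Cm_eq {x : ℝ} (hx : x ∈ ooI D) : Cm a b D x = Cf a b x := indicator_of_mem hx _

theorem muM_eq : muM a b D = (volume.restrict (ooI D)).withDensity
    fun x => ENNReal.ofReal (Real.exp (Cm a b D x) / a x) :=
  withDensity_congr_ae ((ae_restrict_mem (isOpen_ooI D).measurableSet).mono fun x hx => by
    simp only [Cm_eq hx])

theorem nuM_eq : nuM a b D = (volume.restrict (ooI D)).withDensity
    fun x => ENNReal.ofReal (Real.exp (-Cm a b D x)) :=
  withDensity_congr_ae ((ae_restrict_mem (isOpen_ooI D).measurableSet).mono fun x hx => by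
    simp only [Cm_eq hx])

theorem ae_muM : ∀ᵐ x ∂muM a b D, x ∈ ooI D :=
  (withDensity_absolutelyContinuous _ _).ae_le (ae_restrict_mem (isOpen_ooI D).measurableSet)

theorem ae_nuM : ∀ᵐ x ∂nuM a b D, x ∈ ooI D :=
  (withDensity_absolutelyContinuous _ _).ae_le (ae_restrict_mem (isOpen_ooI D).measurableSet)

instance : SFinite (muM a b D) := by unfold muM; infer_instance
instance : SFinite (nuM a b D) := by unfold nuM; infer_instance
instance : NullSingletonClass (muM a b D) :=
  ⟨fun x => withDensity_absolutelyContinuous _ _ (measure_singleton x)⟩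
instance : NullSingletonClass (nuM a b D) :=
  ⟨fun x => withDensity_absolutelyContinuous _ _ (measure_singleton x)⟩

theorem muM_Iic_ne_top (hyp : Hyp a b D) {p : ℝ} (hp : p ∈ ccI D) : muM a b D (Iic p) ≠ ∞ := by
  rw [muM, withDensity_apply _ measurableSet_Iic, Measure.restrict_restrict measurableSet_Iic]
  refine ((lintegral_mono_set ?_).trans_lt (hyp.2.2.2 p hp.1 hp.2).2.lintegral_lt_top).ne
  exact fun x hx => ⟨hx.2.1.le, hx.1⟩

theorem nuM_Iic_ne_top (hyp : Hyp a b D) {p : ℝ} (hp : p ∈ ccI D) : nuM a b D (Iic p) ≠ ∞ := by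
  have hint : IntegrableOn (fun x => Real.exp (-Cf a b x)) (Icc 0 p) :=
    (Real.continuous_exp.comp_continuousOn (Cf_continuousOn hyp hp).neg).integrableOn_Icc
  rw [nuM, withDensity_apply _ measurableSet_Iic, Measure.restrict_restrict measurableSet_Iic]
  refine ((lintegral_mono_set ?_).trans_lt hint.lintegral_lt_top).ne
  exact fun x hx => ⟨hx.2.1.le, hx.1⟩

theorem withDensity_Ioo_ne_zero {φ : ℝ → ℝ≥0∞} (hφ : Measurable φ) (hpos : ∀ x ∈ ooI D, φ x ≠ 0)
    {c d : ℝ} (hcd : c < d) (hsub : Ioo c d ⊆ ooI D) :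
    (volume.restrict (ooI D)).withDensity φ (Ioo c d) ≠ 0 := by
  rw [Ne, withDensity_apply_eq_zero hφ,
    inter_eq_right.2 (show Ioo c d ⊆ {x | φ x ≠ 0} from fun x hx => hpos x (hsub hx)),
    Measure.restrict_apply measurableSet_Ioo, inter_eq_left.2 hsub]
  simpa using hcd

theorem muM_Ioi_ne_zero (hyp : Hyp a b D) {x : ℝ} (hx : x ∈ ooI D) : muM a b D (Ioi x) ≠ 0 := by
  obtain ⟨p, hp, hxp⟩ := exists_gt_mem_ooI hx
  have hC := measurable_Cm hyp
  have ha := hyp.1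
  have h : muM a b D (Ioo x p) ≠ 0 := by
    rw [muM_eq]
    refine withDensity_Ioo_ne_zero (by fun_prop) (fun y hy => ?_) hxp
      ((Ioo_subset_Ioo_left hx.1.le).trans (Ioo_subset_ooI (ooI_subset_ccI D hp)))
    have := hyp.2.2.1 y hy
    simpa using by positivity
  exact fun h0 => h (measure_mono_null Ioo_subset_Ioi_self h0)

theorem nuM_Ioo_ne_zero (hyp : Hyp a b D) {x : ℝ} (hx : x ∈ ooI D) :
    nuM a b D (Ioo 0 x) ≠ 0 := by
  have hC := measurable_Cm hyp
  rw [nuM_eq]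
  refine withDensity_Ioo_ne_zero (by fun_prop) (fun y hy => ?_) hx.1
    (Ioo_subset_ooI (ooI_subset_ccI D hx))
  simpa using Real.exp_pos _

theorem nuM_Iio (x : ℝ) : nuM a b D (Iio x) = nuM a b D (Ioo 0 x) :=
  measure_congr <| ae_nuM.mono fun y hy => by
    have : 0 < y := hy.1
    exact propext ⟨fun h => ⟨this, h⟩, fun h => h.2⟩

theorem le_deltaDN {x : ℝ} (hx : x ∈ ooI D) :
    nuM a b D (Ioo 0 x) * muM a b D (Ioi x) ≤ deltaDN a b D :=
  le_iSup₂ (f := fun x (_ : x ∈ ooI D) => nuM a b D (Ioo 0 x) * muM a b D (Ioi x)) x hx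

/-! ### The lower bound -/

/-- The density of `|f'| dx` with respect to `ν`. -/
def nuSlope (a b : ℝ → ℝ) (D : ℝ≥0∞) (f : ℝ → ℝ) (y : ℝ) : ℝ≥0∞ :=
  ENNReal.ofReal (Real.exp (Cm a b D y) * |deriv f y|)

theorem measurable_nuSlope (hyp : Hyp a b D) (f : ℝ → ℝ) : Measurable (nuSlope a b D f) := by
  have hC := measurable_Cm hyp
  have hd := measurable_deriv f
  have habs : Measurable fun y => |deriv f y| := hd.norm
  unfold nuSlope
  fun_prop

theorem lintegral_nuSlope_sq (hyp : Hyp a b D) (f : ℝ → ℝ) :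
    ∫⁻ y, nuSlope a b D f y ^ (2:ℝ) ∂nuM a b D = Dform a b D f := by
  have hC := measurable_Cm hyp
  have hd := measurable_nuSlope hyp f
  rw [nuM_eq, lintegral_withDensity_eq_lintegral_mul _ (by fun_prop) (by fun_prop), Dform]
  refine setLIntegral_congr_fun (isOpen_ooI D).measurableSet fun y hy => ?_
  simp only [Pi.mul_apply, nuSlope, Cm_eq hy]
  rw [ENNReal.ofReal_rpow_of_nonneg (by positivity) (by norm_num),
    ← ENNReal.ofReal_mul (Real.exp_nonneg _)]
  congr 1
  rw [Real.rpow_two, mul_pow, sq_abs, Real.exp_neg]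
  field_simp

theorem lintegral_deriv_le (hyp : Hyp a b D) (f : ℝ → ℝ) {x : ℝ} (hx : x ∈ ccI D) :
    ∫⁻ y in Ioo 0 x, ‖deriv f y‖ₑ ≤ ∫⁻ y in Iio x, nuSlope a b D f y ∂nuM a b D := by
  have hC := measurable_Cm hyp
  have hd := measurable_nuSlope hyp f
  rw [nuM_eq, restrict_withDensity measurableSet_Iio,
    lintegral_withDensity_eq_lintegral_mul _ (by fun_prop) (by fun_prop),
    Measure.restrict_restrict measurableSet_Iio]
  refine le_trans (le_of_eq ?_) (lintegral_mono_set
    (show Ioo 0 x ⊆ Iio x ∩ ooI D from fun y hy => ⟨hy.2, Ioo_subset_ooI hx hy⟩))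
  refine lintegral_congr fun y => ?_
  simp only [Pi.mul_apply, nuSlope]
  rw [← ENNReal.ofReal_mul (Real.exp_nonneg _), ← mul_assoc, ← Real.exp_add]
  simp [← Real.norm_eq_abs]

/-- A test function vanishing at `0` is dominated by `∫₀ˣ |f'|`. If that integral is infinite there
is nothing to prove; otherwise `f'` is integrable up to the end points. -/
theorem enorm_le (hyp : Hyp a b D) {f : ℝ → ℝ} (hf : C1C D f) (hf0 : f 0 = 0) {x : ℝ}
    (hx : x ∈ ccI D) : ‖f x‖ₑ ≤ ∫⁻ y in Iio x, nuSlope a b D f y ∂nuM a b D := by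
  refine le_trans ?_ (lintegral_deriv_le hyp f hx)
  by_cases htop : ∫⁻ y in Ioo 0 x, ‖deriv f y‖ₑ = ∞
  · rw [htop]; exact le_top
  have hint : IntegrableOn (deriv f) (Ioo 0 x) :=
    ⟨(measurable_deriv f).aestronglyMeasurable, lt_top_iff_ne_top.2 htop⟩
  have ftc := intervalIntegral.integral_eq_sub_of_hasDerivAt_of_le hx.1
    (hf.1.mono (Icc_subset_ccI hx))
    (fun y hy => (hf.2.1 y (Ioo_subset_ooI hx hy)).hasDerivAt)
    ((intervalIntegrable_iff_integrableOn_Ioo_of_le hx.1).2 hint)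
  rw [hf0, sub_zero, intervalIntegral.integral_of_le hx.1, integral_Ioc_eq_integral_Ioo] at ftc
  rw [← ftc]
  exact enorm_integral_le_lintegral_enorm _

/-- Excludes the junk quotient `0 / 0 = 0` in the definition of `λ₀`. -/
theorem Dform_ne_zero (hyp : Hyp a b D) {f : ℝ → ℝ} (hf : C1C D f) (hf0 : f 0 = 0)
    (hne : ¬∀ x ∈ ccI D, f x = 0) : Dform a b D f ≠ 0 := by
  contrapose! hne
  intro x hx
  have hd := measurable_nuSlope hyp f
  rw [← lintegral_nuSlope_sq hyp, lintegral_eq_zero_iff (by fun_prop)] at hne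
  have h0 : ∫⁻ y in Iio x, nuSlope a b D f y ∂nuM a b D = 0 := by
    rw [lintegral_eq_zero_iff hd]
    refine ae_restrict_of_ae (hne.mono fun y hy => ?_)
    simpa using hy
  simpa [h0] using enorm_le hyp hf hf0 hx

theorem muL2_le (hyp : Hyp a b D) (hδ : deltaDN a b D ≠ ∞) {f : ℝ → ℝ} (hf : C1C D f)
    (hf0 : f 0 = 0) : muL2 a b D f ≤ 4 * deltaDN a b D * Dform a b D f := by
  -- `δ < ∞` and `ν(0,x) > 0` force `μ(x,D) < ∞`.
  have hM : ∀ x ∈ ooI D, muM a b D (Ioi x) ≠ ∞ := by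
    intro x hx htop
    have := le_deltaDN (a := a) (b := b) hx
    rw [htop, ENNReal.mul_top (nuM_Ioo_ne_zero hyp hx)] at this
    exact hδ (top_le_iff.1 this)
  have key := hardy (muM a b D) (nuM a b D) (ooI D) ae_muM ae_nuM
    (fun x hx => by rw [nuM_Iio]; exact nuM_Ioo_ne_zero hyp hx)
    (fun x hx => ne_top_of_le_ne_top (nuM_Iic_ne_top hyp (ooI_subset_ccI D hx))
      (measure_mono Iio_subset_Iic_self))
    (fun x hx => muM_Ioi_ne_zero hyp hx) hM (deltaDN a b D)
    (fun x hx => by rw [nuM_Iio]; exact le_deltaDN hx)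
    (nuSlope a b D f) (measurable_nuSlope hyp f)
  rw [lintegral_nuSlope_sq hyp] at key
  refine le_trans (lintegral_mono_ae (ae_muM.mono fun x hx => ?_)) key
  rw [← Real.enorm_eq_ofReal (sq_nonneg _), enorm_pow, ENNReal.rpow_two]
  gcongr
  exact enorm_le hyp hf hf0 (ooI_subset_ccI D hx)

theorem lower_bound (hyp : Hyp a b D) : (4 * deltaDN a b D)⁻¹ ≤ lam0DN a b D := by
  by_cases hδ : deltaDN a b D = ∞
  · simp [hδ]
  refine le_sInf ?_
  rintro r ⟨f, hf, hfin, hf0, hne, rfl⟩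
  rw [ENNReal.le_div_iff_mul_le (Or.inr (Dform_ne_zero hyp hf hf0 hne)) (Or.inr hfin), mul_comm,
    ← div_eq_mul_inv]
  exact ENNReal.div_le_of_le_mul' (muL2_le hyp hδ hf hf0)

/-! ### The upper bound -/

/-- Uses the test function `∫₀ˣ e^{-C} χ` with `χ` a continuous cutoff from `1` on `[0,p]` to `0` on
`[q,D)`: a `C¹` version of `ν(0, x ∧ p)`. -/
theorem upper_bound_aux (hyp : Hyp a b D) {p q : ℝ} (hp : p ∈ ooI D) (hq : q ∈ ooI D)
    (hpq : p < q) :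
    lam0DN a b D * (nuM a b D (Ioo 0 p) * muM a b D (Ioi q)) ≤ 1 := by
  have hqc := ooI_subset_ccI D hq
  set C' : ℝ → ℝ := fun t => Cf a b (max 0 (min t q)) with hC'
  have hC'c : Continuous C' := (Cf_continuousOn hyp hqc).comp_continuous (by fun_prop)
    fun t => ⟨le_max_left _ _, max_le hq.1.le (min_le_right _ _)⟩
  have hC'eq : ∀ t, 0 < t → t < q → C' t = Cf a b t := fun t h0 h1 => by
    simp only [hC', min_eq_left h1.le, max_eq_right h0.le]
  set χ : ℝ → ℝ := fun t => max 0 (min 1 ((q - t) / (q - p))) with hχ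
  have hqp : 0 < q - p := sub_pos.2 hpq
  have hχc : Continuous χ := by fun_prop
  have hχ0 : ∀ t, 0 ≤ χ t := fun t => le_max_left _ _
  have hχ1 : ∀ t, χ t ≤ 1 := fun t => max_le zero_le_one (min_le_left _ _)
  have hχp : ∀ t, t ≤ p → χ t = 1 := fun t ht => by
    have : 1 ≤ (q - t) / (q - p) := by rw [le_div_iff₀ hqp]; linarith
    simp only [hχ, min_eq_left this, max_eq_right zero_le_one]
  have hχq : ∀ t, q ≤ t → χ t = 0 := fun t ht => by
    have : (q - t) / (q - p) ≤ 0 := div_nonpos_of_nonpos_of_nonneg (by linarith) hqp.le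
    simp only [hχ, min_eq_right (this.trans zero_le_one), max_eq_left this]
  set g : ℝ → ℝ := fun t => Real.exp (-C' t) * χ t with hg
  have hgc : Continuous g := by fun_prop
  have hg0 : ∀ t, 0 ≤ g t := fun t => mul_nonneg (Real.exp_nonneg _) (hχ0 t)
  set f : ℝ → ℝ := fun x => ∫ t in (0:ℝ)..x, g t with hf
  have hder : ∀ x, HasDerivAt f (g x) x := fun x => hgc.integral_hasStrictDerivAt 0 x |>.hasDerivAt
  have hderiv : deriv f = g := funext fun x => (hder x).deriv
  have hfd : Differentiable ℝ f := fun x => (hder x).differentiableAt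
  have hC1 : C1C D f := ⟨hfd.continuous.continuousOn, fun x _ => hfd x,
    by rw [hderiv]; exact hgc.continuousOn⟩
  have hf0 : f 0 = 0 := by simp [hf]
  have hmono : Monotone f := monotone_of_deriv_nonneg hfd fun x => by rw [hderiv]; exact hg0 x
  -- `D(f) ≤ f(q)` because `χ² ≤ χ`.
  have hfq : ENNReal.ofReal (f q) = ∫⁻ t in Ioo 0 q, ENNReal.ofReal (g t) := by
    rw [hf]
    simp only
    rw [intervalIntegral.integral_of_le hq.1.le, integral_Ioc_eq_integral_Ioo,
      ofReal_integral_eq_lintegral_ofReal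
        (hgc.integrableOn_Icc.mono_set Ioo_subset_Icc_self) (Eventually.of_forall hg0)]
  have hD : Dform a b D f ≤ ENNReal.ofReal (f q) := by
    rw [hfq, Dform, hderiv, ← lintegral_indicator (isOpen_ooI D).measurableSet,
      ← lintegral_indicator measurableSet_Ioo]
    refine lintegral_mono fun t => ?_
    by_cases ht : t ∈ ooI D
    · rw [indicator_of_mem ht]
      rcases lt_or_ge t q with htq | htq
      · rw [indicator_of_mem (show t ∈ Ioo 0 q from ⟨ht.1, htq⟩)]
        refine ENNReal.ofReal_le_ofReal ?_
        simp only [hg, hC'eq t ht.1 htq, Real.exp_neg]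
        have he := Real.exp_pos (Cf a b t)
        have : Real.exp (Cf a b t) * ((Real.exp (Cf a b t))⁻¹ * χ t) ^ 2
            = (Real.exp (Cf a b t))⁻¹ * (χ t * χ t) := by field_simp
        rw [this]
        exact mul_le_mul_of_nonneg_left (mul_le_of_le_one_left (hχ0 t) (hχ1 t)) (by positivity)
      · simp [hg, hχq t htq]
    · rw [indicator_of_notMem ht]; exact zero_le
  have hN : nuM a b D (Ioo 0 p) ≤ ENNReal.ofReal (f q) := by
    rw [hfq, nuM, withDensity_apply _ measurableSet_Ioo,
      Measure.restrict_restrict measurableSet_Ioo,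
      inter_eq_left.2 (Ioo_subset_ooI (ooI_subset_ccI D hp))]
    refine le_trans (le_of_eq ?_) (lintegral_mono_set (Ioo_subset_Ioo_right hpq.le))
    refine setLIntegral_congr_fun measurableSet_Ioo fun t ht => ?_
    simp only [hg, hC'eq t ht.1 (ht.2.trans hpq), hχp t ht.2.le, mul_one]
  have hfqpos : 0 < f q := by
    have := (pos_iff_ne_zero.2 (nuM_Ioo_ne_zero hyp hp)).trans_le hN
    simpa using this
  have hL2 : ENNReal.ofReal (f q) * ENNReal.ofReal (f q) * muM a b D (Ioi q) ≤ muL2 a b D f := by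
    rw [muL2, ← setLIntegral_const]
    refine le_trans (setLIntegral_mono' measurableSet_Ioi fun x hx => ?_)
      (setLIntegral_le_lintegral (Ioi q) _)
    rw [← ENNReal.ofReal_mul hfqpos.le]
    refine ENNReal.ofReal_le_ofReal ?_
    have := hmono (le_of_lt (show q < x from hx))
    nlinarith
  set F := ENNReal.ofReal (f q) with hF
  have hF0 : F ≠ 0 := by simpa [hF] using hfqpos
  have hFt : F ≠ ∞ := ENNReal.ofReal_ne_top
  have hlam : lam0DN a b D ≤ Dform a b D f / muL2 a b D f :=
    sInf_le ⟨f, hC1, ne_top_of_le_ne_top hFt hD, hf0, fun hall => hfqpos.ne' (hall q hqc), rfl⟩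
  have hM0 := muM_Ioi_ne_zero hyp hq
  calc lam0DN a b D * (nuM a b D (Ioo 0 p) * muM a b D (Ioi q))
      ≤ F / (F * F * muM a b D (Ioi q)) * (F * muM a b D (Ioi q)) :=
        mul_le_mul' (hlam.trans (ENNReal.div_le_div hD hL2)) (mul_le_mul_left hN _)
    _ = F * (F * muM a b D (Ioi q)) / (F * (F * muM a b D (Ioi q))) := by
        rw [mul_assoc F F, div_eq_mul_inv, div_eq_mul_inv]; ring
    _ ≤ 1 := ENNReal.div_self_le_one

theorem upper_bound (hyp : Hyp a b D) : lam0DN a b D ≤ (deltaDN a b D)⁻¹ := by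
  rw [ENNReal.le_inv_iff_mul_le, deltaDN, ENNReal.mul_iSup]
  refine iSup_le fun p => ?_
  rw [ENNReal.mul_iSup]
  refine iSup_le fun hp => ?_
  -- `μ(q,D) ↑ μ(p,D)` as `q ↓ p`.
  obtain ⟨p', hp', hpp'⟩ := exists_gt_mem_ooI hp
  obtain ⟨u, hu, hup, hlim⟩ := exists_seq_strictAnti_tendsto' hpp'
  have hU : Ioi p = ⋃ n, Ioi (u n) := by
    ext y
    simp only [mem_Ioi, mem_iUnion]
    exact ⟨fun hy => (hlim.eventually (gt_mem_nhds hy)).exists, fun ⟨n, hn⟩ => (hup n).1.trans hn⟩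
  have hmo : Monotone fun n => Ioi (u n) := fun m n hmn => Ioi_subset_Ioi (hu.antitone hmn)
  rw [hU, hmo.measure_iUnion, ENNReal.mul_iSup, ENNReal.mul_iSup]
  exact iSup_le fun n => upper_bound_aux hyp hp
    (Ioo_subset_ooI (ooI_subset_ccI D hp') ⟨hp.1.trans (hup n).1, (hup n).2⟩) (hup n).1

/-! ### Consequences -/

theorem lam0DN_pos_iff (hyp : Hyp a b D) : 0 < lam0DN a b D ↔ deltaDN a b D < ∞ := by
  constructor
  · intro h
    have := h.trans_le (upper_bound hyp)
    rw [ENNReal.inv_pos] at this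
    exact this.lt_top
  · intro h
    refine lt_of_lt_of_le ?_ (lower_bound hyp)
    rw [ENNReal.inv_pos]
    exact ENNReal.mul_ne_top (by norm_num) h.ne

theorem deltaDN_eq_top (hD : 0 < D) (hyp : Hyp a b D) (h : muM a b D univ = ∞) :
    deltaDN a b D = ∞ := by
  obtain ⟨x, hx⟩ := ooI_nonempty hD
  have htop : muM a b D (Ioi x) = ∞ := by
    have h1 : muM a b D univ ≤ muM a b D (Iic x) + muM a b D (Ioi x) := by
      rw [← Iic_union_Ioi (a := x)]; exact measure_union_le _ _
    rw [h, top_le_iff, ENNReal.add_eq_top] at h1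
    exact h1.resolve_left (muM_Iic_ne_top hyp (ooI_subset_ccI D hx))
  have := le_deltaDN (a := a) (b := b) hx
  rwa [htop, ENNReal.mul_top (nuM_Ioo_ne_zero hyp hx), top_le_iff] at this

theorem deltaDN_lt_top (hμ : muM a b D univ ≠ ∞) (hν : nuM a b D univ ≠ ∞) :
    deltaDN a b D < ∞ :=
  (iSup₂_le fun _ _ => mul_le_mul' (measure_mono (subset_univ _))
    (measure_mono (subset_univ _))).trans_lt (ENNReal.mul_lt_top hν.lt_top hμ.lt_top)

theorem total_mass_ne_top (hyp : Hyp a b D) (h : D ≠ ∞ ∨ (∫⁻ u in ooI D,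
      ENNReal.ofReal (Real.exp (Cf a b u) / a u + Real.exp (-Cf a b u))) ≠ ∞) :
    muM a b D univ ≠ ∞ ∧ nuM a b D univ ≠ ∞ := by
  rcases h with h | h
  · have hp : D.toReal ∈ ccI D := ⟨toReal_nonneg, ENNReal.ofReal_toReal_le⟩
    have hsub : ∀ x ∈ ooI D, x ∈ Iic D.toReal := fun x hx =>
      (ENNReal.ofReal_le_iff_le_toReal h).1 hx.2.le
    exact ⟨ne_top_of_le_ne_top (muM_Iic_ne_top hyp hp)
        (measure_mono_ae (ae_muM.mono fun x hx _ => hsub x hx)),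
      ne_top_of_le_ne_top (nuM_Iic_ne_top hyp hp)
        (measure_mono_ae (ae_nuM.mono fun x hx _ => hsub x hx))⟩
  · rw [muM, nuM, withDensity_apply _ MeasurableSet.univ, withDensity_apply _ MeasurableSet.univ,
      Measure.restrict_univ]
    refine ⟨ne_top_of_le_ne_top h (setLIntegral_mono' (isOpen_ooI D).measurableSet fun x hx => ?_),
      ne_top_of_le_ne_top h (setLIntegral_mono' (isOpen_ooI D).measurableSet fun x hx => ?_)⟩
    · exact ENNReal.ofReal_le_ofReal (le_add_of_nonneg_right (Real.exp_nonneg _))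
    · have := hyp.2.2.1 x hx
      exact ENNReal.ofReal_le_ofReal (le_add_of_nonneg_left (by positivity))

end Weights

/-- Theorem 4.2: criterion and basic estimates for the DN principal eigenvalue. -/
theorem dn_criterion_basic_estimates
    (a b : ℝ → ℝ) (D : ℝ≥0∞) (hD : 0 < D) (hyp : Hyp a b D) :
    (0 < lam0DN a b D ↔ deltaDN a b D < ∞) ∧
    (4 * deltaDN a b D)⁻¹ ≤ lam0DN a b D ∧ lam0DN a b D ≤ (deltaDN a b D)⁻¹ ∧
    (muM a b D Set.univ = ∞ → lam0DN a b D = 0) ∧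
    ((D ≠ ∞ ∨
        (∫⁻ u in ooI D,
          ENNReal.ofReal (Real.exp (Cf a b u) / a u + Real.exp (-Cf a b u))) ≠ ∞) →
      0 < lam0DN a b D) := by
  refine ⟨lam0DN_pos_iff hyp, lower_bound hyp, upper_bound hyp, fun h => ?_, fun h => ?_⟩
  · simpa [deltaDN_eq_top hD hyp h] using upper_bound hyp
  · exact (lam0DN_pos_iff hyp).2
      (deltaDN_lt_top (total_mass_ne_top hyp h).1 (total_mass_ne_top hyp h).2)
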